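/- Let α ∈ C and d ≥ 2. There exists a constant δ depending only on d such that for every normal-form polynomial f = f_c of degree d over Q̄ (viewed in C), if |α| ≤ C_{f} (i.e., α ∉ B_f(∞)), then every y ∈ C with f^3(y) = α satisfies min over β with f^3(β) = 0 of log|y − β| ≤ −(1/(d−1)) M(f) + δ, where M(f) is the maximal escape rate of a critical point of f. -/

import Mathlib

open Polynomial Filter Topology

/-- The escape radius C_f = 2d · max_{0≤i≤d}{1, |a_i/a_d|^{1/(d-i)}, |a_d|^{-1/(d-1)}};
B_f(∞) = {z ∈ ℂ : |z| > C_f}. -/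
noncomputable def escBound (f : Polynomial ℂ) (d : ℕ) : ℝ :=
  (2 * d : ℝ) *
    (Finset.range (d + 1)).sup' (Finset.nonempty_range_iff.mpr (Nat.succ_ne_zero d))
      (fun i => max 1 (max (‖f.coeff i / f.coeff d‖ ^ ((1 : ℝ) / ((d : ℝ) - (i : ℝ))))
        (‖f.coeff d‖ ^ (-(1 : ℝ) / ((d : ℝ) - 1)))))

structure NF (f : Polynomial ℂ) (d : ℕ) (R : ℝ) : Prop where
  hd : 2 ≤ d
  deg : f.natDegree = d
  zero : f.eval 0 = 0
  monic : (Polynomial.derivative f).Monic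
  one_le : 1 ≤ R
  bd : ∀ c : ℂ, (Polynomial.derivative f).eval c = 0 → ‖c‖ ≤ R

namespace NF

variable {f : Polynomial ℂ} {d : ℕ} {R : ℝ}

theorem dderiv (h : NF f d R) : (Polynomial.derivative f).natDegree = d - 1 := by
  rw [Polynomial.natDegree_derivative, h.deg]

theorem lead (h : NF f d R) : f.coeff d = (d : ℂ)⁻¹ := by
  have h1 := h.monic
  rw [Polynomial.Monic, Polynomial.leadingCoeff, h.dderiv, Polynomial.coeff_derivative] at h1
  have h2 : d - 1 + 1 = d := by have := h.hd; omega
  rw [h2] at h1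
  have h3 : (((d - 1 : ℕ) : ℂ) + 1) = d := by
    rw [← h2]; push_cast; simp
  rw [h3] at h1
  exact eq_inv_of_mul_eq_one_left h1

theorem coeff_le (h : NF f d R) (i : ℕ) (hi : i ≤ d) :
    ‖f.coeff i‖ ≤ 2 ^ d * R ^ (d - i) := by
  have hR := h.one_le
  rcases i with _ | i
  · rw [Polynomial.coeff_zero_eq_eval_zero, h.zero, norm_zero]; positivity
  · have h1 := Polynomial.coeff_le_of_roots_le (p := Polynomial.derivative f)
      (f := RingHom.id ℂ) (B := R) i h.monic (IsAlgClosed.splits _) (by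
        intro z hz
        rw [Polynomial.map_id] at hz
        exact h.bd z (Polynomial.isRoot_of_mem_roots hz))
    rw [Polynomial.map_id, h.dderiv, Polynomial.coeff_derivative, norm_mul] at h1
    have h2 : (1 : ℝ) ≤ ‖((i : ℂ) + 1)‖ := by
      have : ((i : ℂ) + 1) = ((i + 1 : ℕ) : ℂ) := by push_cast; rfl
      rw [this, Complex.norm_natCast]; push_cast; linarith [Nat.cast_nonneg (α := ℝ) i]
    have h3 : (((d - 1).choose i : ℕ) : ℝ) ≤ 2 ^ d := by
      have : (d - 1).choose i ≤ 2 ^ d :=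
        (Nat.choose_le_two_pow _ _).trans (Nat.pow_le_pow_right (by norm_num) (by omega))
      exact_mod_cast this
    have h4 : d - 1 - i = d - (i + 1) := by omega
    rw [h4] at h1
    calc ‖f.coeff (i + 1)‖ ≤ ‖f.coeff (i + 1)‖ * ‖((i : ℂ) + 1)‖ :=
          le_mul_of_one_le_right (norm_nonneg _) h2
      _ ≤ _ := h1
      _ ≤ R ^ (d - (i + 1)) * 2 ^ d := by gcongr
      _ = _ := mul_comm _ _

theorem esc_le (h : NF f d R) : escBound f d ≤ (2 * d * (d * 2 ^ d)) * R := by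
  have hR := h.one_le
  have hd := h.hd
  have hd' : (2 : ℝ) ≤ d := by exact_mod_cast hd
  have hp : (1 : ℝ) ≤ 2 ^ d := one_le_pow₀ (by norm_num)
  have hK : (1 : ℝ) ≤ d * 2 ^ d := by nlinarith
  unfold escBound
  rw [mul_assoc (2 * (d : ℝ))]
  gcongr
  apply Finset.sup'_le
  intro i hi
  have hi' : i ≤ d := by simpa [Nat.lt_succ_iff] using hi
  have hKR : (1 : ℝ) ≤ d * 2 ^ d * R := by nlinarith
  refine max_le hKR (max_le ?_ ?_)
  · rcases hi'.eq_or_lt with rfl | hlt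
    · simpa using hKR
    · have hk : 1 ≤ d - i := by omega
      have h1 : ‖f.coeff i / f.coeff d‖ ≤ (d * 2 ^ d * R) ^ (d - i) := by
        rw [h.lead, div_inv_eq_mul, norm_mul, Complex.norm_natCast]
        calc ‖f.coeff i‖ * d ≤ (2 ^ d * R ^ (d - i)) * d := by
              gcongr; exact h.coeff_le i hi'
          _ = (d * 2 ^ d) ^ 1 * R ^ (d - i) := by ring
          _ ≤ (d * 2 ^ d) ^ (d - i) * R ^ (d - i) := by
              gcongr
          _ = _ := (mul_pow _ _ _).symm
      have h2 : (d : ℝ) - i = ((d - i : ℕ) : ℝ) := by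
        rw [Nat.cast_sub hi']
      rw [h2, one_div]
      calc _ ≤ ((d * 2 ^ d * R) ^ (d - i)) ^ ((((d - i : ℕ) : ℝ))⁻¹) := by
            gcongr
        _ = _ := Real.pow_rpow_inv_natCast (by positivity) (by omega)
  · rw [h.lead, norm_inv, Complex.norm_natCast, neg_div, Real.inv_rpow (by positivity),
      Real.rpow_neg (by positivity), inv_inv]
    have h3 : (1 : ℝ) / (d - 1) ≤ 1 := by
      rw [div_le_one (by linarith)]; linarith
    calc (d : ℝ) ^ ((1 : ℝ) / (d - 1)) ≤ (d : ℝ) ^ (1 : ℝ) :=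
          Real.rpow_le_rpow_of_exponent_le (by linarith) h3
      _ = d := Real.rpow_one _
      _ ≤ d * 2 ^ d * R := by
        rw [mul_assoc]
        exact le_mul_of_one_le_right (by linarith) (by nlinarith)

theorem eval_le (h : NF f d R) (A : ℝ) (hA : R ≤ A) (z : ℂ) (hz : ‖z‖ ≤ A) :
    ‖f.eval z‖ ≤ ((d + 1) * 2 ^ d) * A ^ d := by
  have hR := h.one_le
  have hA0 : 0 ≤ A := by linarith
  rw [Polynomial.eval_eq_sum_range, h.deg]
  calc _ ≤ ∑ i ∈ Finset.range (d + 1), ‖f.coeff i * z ^ i‖ := norm_sum_le _ _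
    _ ≤ ∑ i ∈ Finset.range (d + 1), 2 ^ d * A ^ d := by
      apply Finset.sum_le_sum
      intro i hi
      have hi' : i ≤ d := by simpa [Nat.lt_succ_iff] using hi
      rw [norm_mul, norm_pow]
      calc _ ≤ (2 ^ d * R ^ (d - i)) * A ^ i := by
            gcongr
            exact h.coeff_le i hi'
        _ ≤ (2 ^ d * A ^ (d - i)) * A ^ i := by gcongr
        _ = 2 ^ d * A ^ d := by rw [mul_assoc, ← pow_add, Nat.sub_add_cancel hi']
    _ = _ := by simp; ring

theorem iter_le (h : NF f d R) (z : ℂ) (hz : ‖z‖ ≤ R) (n : ℕ) :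
    ‖(fun x => f.eval x)^[n] z‖ ≤ (((d + 1) * 2 ^ d) * R) ^ (d ^ n) / ((d + 1) * 2 ^ d) := by
  have hR := h.one_le
  have hd := h.hd
  have hp : (1 : ℝ) ≤ 2 ^ d := one_le_pow₀ (by norm_num)
  have hL : (1 : ℝ) ≤ (d + 1) * 2 ^ d := by nlinarith [Nat.cast_nonneg (α := ℝ) d]
  generalize hLd : (((d : ℝ) + 1) * 2 ^ d) = L at *
  have hLR : 1 ≤ L * R := by nlinarith
  induction n with
  | zero => simpa [mul_div_cancel_left₀ R (by positivity : L ≠ 0)] using hz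
  | succ n ih =>
    rw [Function.iterate_succ_apply']
    have hA : R ≤ (L * R) ^ (d ^ n) / L := by
      rw [le_div_iff₀ (by positivity), mul_comm]
      exact le_self_pow₀ hLR (by positivity)
    have h1 := h.eval_le _ hA _ ih
    rw [hLd] at h1
    refine h1.trans ?_
    rw [div_pow, ← pow_mul, ← pow_succ, ← mul_div_assoc, div_le_div_iff₀ (by positivity) (by positivity)]
    have : L * L ≤ L ^ d := by
      rw [← pow_two]; exact pow_le_pow_right₀ hL hd
    calc _ = (L * L) * (L * R) ^ d ^ (n + 1) := by ring
      _ ≤ L ^ d * (L * R) ^ d ^ (n + 1) := by gcongr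
      _ = _ := mul_comm _ _

theorem G_le (h : NF f d R) (z : ℂ) (hz : ‖z‖ ≤ R) (g : ℝ)
    (hg : Tendsto (fun n : ℕ => ((d : ℝ) ^ n)⁻¹ * Real.log (max 1 ‖(fun x => f.eval x)^[n] z‖))
        atTop (nhds g)) : g ≤ Real.log ((d + 1) * 2 ^ d) + Real.log R := by
  have hR := h.one_le
  have hd := h.hd
  have hd0 : (0 : ℝ) < d := by positivity
  have hp : (1 : ℝ) ≤ 2 ^ d := one_le_pow₀ (by norm_num)
  have hL : (1 : ℝ) ≤ (d + 1) * 2 ^ d := by nlinarith [Nat.cast_nonneg (α := ℝ) d]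
  refine le_of_tendsto' hg ?_
  intro n
  have h1 := h.iter_le z hz n
  generalize hLd : (((d : ℝ) + 1) * 2 ^ d) = L at *
  have hLR : 1 ≤ L * R := by nlinarith
  rw [← Real.log_mul (by positivity) (by positivity), inv_mul_le_iff₀ (by positivity)]
  have h2 : Real.log (max 1 ‖(fun x => f.eval x)^[n] z‖) ≤ Real.log ((L * R) ^ (d ^ n)) := by
    apply Real.log_le_log (by positivity)
    refine max_le (one_le_pow₀ hLR) (h1.trans ?_)
    exact div_le_self (by positivity) hL
  rw [Real.log_pow] at h2
  push_cast at h2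
  exact h2

theorem preim_le (h : NF f d R) (K : ℝ) (hK : 0 ≤ K) (z : ℂ) (hz : ‖f.eval z‖ ≤ K * R) :
    ‖z‖ ≤ (1 + d * (K + d * 2 ^ d)) * R := by
  have hR := h.one_le
  have hd := h.hd
  have hd0 : (0 : ℝ) < d := by positivity
  by_contra hcon
  push Not at hcon
  have hT : 0 ≤ (d : ℝ) * (K + d * 2 ^ d) := by positivity
  have hzR : R ≤ ‖z‖ := by nlinarith
  have hz0 : 0 < ‖z‖ := by linarith
  have h1 : (f.coeff d) * z ^ d = f.eval z - ∑ i ∈ Finset.range d, f.coeff i * z ^ i := by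
    rw [Polynomial.eval_eq_sum_range, h.deg, Finset.sum_range_succ]; ring
  have h2 : ‖∑ i ∈ Finset.range d, f.coeff i * z ^ i‖ ≤ d * 2 ^ d * (R * ‖z‖ ^ (d - 1)) := by
    calc _ ≤ ∑ i ∈ Finset.range d, ‖f.coeff i * z ^ i‖ := norm_sum_le _ _
      _ ≤ ∑ i ∈ Finset.range d, 2 ^ d * (R * ‖z‖ ^ (d - 1)) := by
        apply Finset.sum_le_sum
        intro i hi
        have hi' : i < d := by simpa using hi
        rw [norm_mul, norm_pow]
        have e1 : d - i = (d - 1 - i) + 1 := by omega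
        have e2 : d - 1 = (d - 1 - i) + i := by omega
        calc _ ≤ (2 ^ d * R ^ (d - i)) * ‖z‖ ^ i := by
              gcongr
              exact h.coeff_le i hi'.le
          _ = 2 ^ d * (R * (R ^ (d - 1 - i) * ‖z‖ ^ i)) := by rw [e1, pow_succ]; ring
          _ ≤ 2 ^ d * (R * (‖z‖ ^ (d - 1 - i) * ‖z‖ ^ i)) := by gcongr
          _ = _ := by rw [← pow_add, ← e2]
      _ = _ := by simp; ring
  have h3 : ‖z‖ ^ d / d ≤ K * R + d * 2 ^ d * (R * ‖z‖ ^ (d - 1)) := by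
    have := congrArg norm h1
    rw [norm_mul, norm_pow, h.lead, norm_inv, Complex.norm_natCast] at this
    rw [div_eq_inv_mul, this]
    exact (norm_sub_le _ _).trans (add_le_add hz h2)
  have h4 : K * R ≤ K * (R * ‖z‖ ^ (d - 1)) := by
    gcongr
    exact le_mul_of_one_le_right (by linarith) (one_le_pow₀ (by linarith))
  have e3 : ‖z‖ ^ d = ‖z‖ * ‖z‖ ^ (d - 1) := by
    rw [← pow_succ']; congr 1; omega
  have hP : 0 < ‖z‖ ^ (d - 1) := by positivity
  rw [div_le_iff₀ hd0, e3] at h3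
  have h5 : ‖z‖ * ‖z‖ ^ (d - 1) ≤ (d * (K + d * 2 ^ d) * R) * ‖z‖ ^ (d - 1) := by
    calc _ ≤ _ := h3
      _ ≤ (K * (R * ‖z‖ ^ (d - 1)) + d * 2 ^ d * (R * ‖z‖ ^ (d - 1))) * d := by gcongr
      _ = _ := by ring
  have h6 := le_of_mul_le_mul_right h5 hP
  linarith

theorem natDeg_sub (h : NF f d R) (w : ℂ) : (f - C w).natDegree = d := by
  rw [Polynomial.natDegree_sub_C, h.deg]

theorem norm_eval_sub (h : NF f d R) (w z : ℂ) :
    d * ‖f.eval z - w‖ = ((f - C w).roots.map (fun s => ‖z - s‖)).prod := by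
  have hd := h.hd
  have hd0 : (0 : ℝ) < d := by positivity
  have h1 := (IsAlgClosed.splits (f - C w)).eval_eq_prod_roots z
  have hl : (f - C w).leadingCoeff = (d : ℂ)⁻¹ := by
    rw [Polynomial.leadingCoeff, h.natDeg_sub, Polynomial.coeff_sub, Polynomial.coeff_C,
      if_neg (by omega), sub_zero, h.lead]
  rw [hl, Polynomial.eval_sub, Polynomial.eval_C] at h1
  rw [h1, norm_mul, norm_inv, Complex.norm_natCast, mul_inv_cancel_left₀ hd0.ne']
  have := map_multiset_prod (normHom (α := ℂ)) ((f - C w).roots.map (fun s => z - s))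
  simpa [Multiset.map_map, Function.comp_def] using this

theorem mem_roots' (h : NF f d R) (w s : ℂ) : s ∈ (f - C w).roots ↔ f.eval s = w := by
  have hd := h.hd
  have h0 : f - C w ≠ 0 := by
    intro h0
    have := h.natDeg_sub w
    rw [h0] at this
    simp at this; omega
  rw [Polynomial.mem_roots h0, Polynomial.IsRoot, Polynomial.eval_sub, Polynomial.eval_C, sub_eq_zero]

theorem card_roots' (h : NF f d R) (w : ℂ) : (f - C w).roots.card = d := by
  rw [← h.natDeg_sub w]
  exact (IsAlgClosed.splits (f - C w)).natDegree_eq_card_roots.symm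

theorem pow_le_prod (m : Multiset ℂ) (g : ℂ → ℝ) (a : ℝ) (ha : 0 ≤ a) (H : ∀ s ∈ m, a ≤ g s) :
    a ^ m.card ≤ (m.map g).prod := by
  induction m using Multiset.induction with
  | empty => simp
  | cons x m ih =>
    rw [Multiset.card_cons, Multiset.map_cons, Multiset.prod_cons, pow_succ']
    have h1 := H x (Multiset.mem_cons_self _ _)
    have h2 := ih (fun s hs => H s (Multiset.mem_cons_of_mem hs))
    exact mul_le_mul h1 h2 (by positivity) (ha.trans h1)

theorem exists_far (h : NF f d R) (K : ℝ) (hKR : K * d * 2 ^ d < R)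
    (hc : ∃ c : ℂ, (Polynomial.derivative f).eval c = 0 ∧ ‖c‖ = R)
    (w : ℂ) (hw : ‖w‖ ≤ K * R) (z : ℂ) : ∃ s, f.eval s = w ∧ R / 8 ≤ ‖z - s‖ := by
  have hR := h.one_le
  have hd := h.hd
  by_contra hcon
  push Not at hcon
  obtain ⟨c, hc0, hcR⟩ := hc
  have hdf : Polynomial.derivative (f - C w) = Polynomial.derivative f := by simp
  have hGL := Polynomial.rootSet_derivative_subset_convexHull_rootSet (P := f - C w)
    (by rw [← Polynomial.natDegree_pos_iff_degree_pos, h.natDeg_sub]; omega)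
  have hsub : (f - C w).rootSet ℂ ⊆ Metric.ball z (R / 8) := by
    intro s hs
    have hs2 := Polynomial.aeval_eq_zero_of_mem_rootSet hs
    simp [sub_eq_zero] at hs2
    have := hcon s hs2
    rwa [Metric.mem_ball, dist_comm, dist_eq_norm]
  have hcb : c ∈ Metric.ball z (R / 8) := by
    refine convexHull_min hsub (convex_ball _ _) (hGL ?_)
    rw [hdf, Polynomial.mem_rootSet]
    refine ⟨h.monic.ne_zero, by simpa using hc0⟩
  rw [Metric.mem_ball, dist_eq_norm] at hcb
  have h1 := pow_le_prod (f - C w).roots (fun s => ‖(0 : ℂ) - s‖) (R / 2) (by linarith) (by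
    intro s hs
    have hs2 := hcon s ((h.mem_roots' w s).1 hs)
    simp only [zero_sub, norm_neg]
    have e : c = (c - z) + (z - s) + s := by ring
    have := norm_add₃_le (a := c - z) (b := z - s) (c := s)
    rw [← e] at this
    linarith)
  rw [h.card_roots', ← h.norm_eval_sub, h.zero, zero_sub, norm_neg, div_pow,
    div_le_iff₀ (by positivity)] at h1
  have h2 : R * R ≤ R ^ d := by
    rw [← pow_two]; exact pow_le_pow_right₀ hR hd
  have h3 : (d : ℝ) * ‖w‖ * 2 ^ d ≤ d * (K * R) * 2 ^ d := by gcongr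
  have h4 : (K * d * 2 ^ d) * R < R * R := by
    exact mul_lt_mul_of_pos_right hKR (by linarith)
  nlinarith

theorem exists_near (h : NF f d R) (K : ℝ) (hKR : K * d * 2 ^ d < R)
    (hc : ∃ c : ℂ, (Polynomial.derivative f).eval c = 0 ∧ ‖c‖ = R)
    (w : ℂ) (hw : ‖w‖ ≤ K * R) (z : ℂ) (E : ℝ) (hE : ‖f.eval z - w‖ ≤ E) :
    ∃ s, f.eval s = w ∧ ‖z - s‖ ^ (d - 1) ≤ 8 * d * E / R := by
  classical
  have hR := h.one_le
  have hd := h.hd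
  obtain ⟨s0, hs0, hfar⟩ := h.exists_far K hKR hc w hw z
  have hm0 := (h.mem_roots' w s0).2 hs0
  obtain ⟨s, hs, hmin⟩ := Finset.exists_min_image (f - C w).roots.toFinset (fun s => ‖z - s‖)
    ⟨s0, by simpa using hm0⟩
  have hs' := Multiset.mem_toFinset.1 hs
  refine ⟨s, (h.mem_roots' w s).1 hs', ?_⟩
  obtain ⟨m, hm⟩ := Multiset.exists_cons_of_mem hm0
  have hcard := h.card_roots' w
  have hp := h.norm_eval_sub w z
  have hlow := pow_le_prod m (fun s => ‖z - s‖) ‖z - s‖ (norm_nonneg _) (by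
    intro t ht
    exact hmin t (by rw [Multiset.mem_toFinset, hm]; exact Multiset.mem_cons_of_mem ht))
  rw [hm, Multiset.card_cons] at hcard
  rw [hm, Multiset.map_cons, Multiset.prod_cons] at hp
  have hmc : m.card = d - 1 := by omega
  rw [hmc] at hlow
  rw [le_div_iff₀ (by linarith)]
  have h1 : R / 8 * ‖z - s‖ ^ (d - 1) ≤ d * E := by
    calc _ ≤ ‖z - s0‖ * (m.map (fun s => ‖z - s‖)).prod := by gcongr
      _ = d * ‖f.eval z - w‖ := hp.symm
      _ ≤ _ := by gcongr
  nlinarith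

theorem exists_R (hd : 2 ≤ d) (hdeg : f.natDegree = d) (h0 : f.eval 0 = 0)
    (hm : (Polynomial.derivative f).Monic) :
    ∃ R, NF f d R ∧ (R = 1 ∨ ∃ c : ℂ, (Polynomial.derivative f).eval c = 0 ∧ ‖c‖ = R) := by
  classical
  by_cases H : ∀ c : ℂ, (Polynomial.derivative f).eval c = 0 → ‖c‖ ≤ 1
  · exact ⟨1, ⟨hd, hdeg, h0, hm, le_rfl, H⟩, Or.inl rfl⟩
  · push Not at H
    obtain ⟨c, hc, hc1⟩ := H
    have hmem : ∀ c : ℂ, c ∈ (Polynomial.derivative f).roots.toFinset ↔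
        (Polynomial.derivative f).eval c = 0 := by
      intro c
      rw [Multiset.mem_toFinset, Polynomial.mem_roots hm.ne_zero, Polynomial.IsRoot]
    obtain ⟨b, hb, hmax⟩ := Finset.exists_max_image (Polynomial.derivative f).roots.toFinset
      (fun s => ‖s‖) ⟨c, (hmem c).2 hc⟩
    exact ⟨‖b‖, ⟨hd, hdeg, h0, hm, hc1.le.trans (hmax c ((hmem c).2 hc)),
      fun c hc => hmax c ((hmem c).2 hc)⟩, Or.inr ⟨b, (hmem b).1 hb, rfl⟩⟩

end NF

/-- for d ≥ 2 there is a constant δ depending only on d such that for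
every degree d normal-form polynomial f = f_c over ℚ̄ viewed in ℂ (algebraic
coefficients, f(0) = 0, f' monic) with maximal critical escape rate M(f), and every
α ∈ ℂ with |α| ≤ C_f (i.e. α ∉ B_f(∞)), every y with f³(y) = α satisfies
min_{β : f³(β)=0} log|y - β| ≤ -(1/(d-1)) M(f) + δ. -/
theorem stmt16 (d : ℕ) (hd : 2 ≤ d) :
    ∃ δ : ℝ, ∀ (f : Polynomial ℂ) (G : ℂ → ℝ) (M : ℝ),
      f.natDegree = d → (∀ n : ℕ, IsAlgebraic ℚ (f.coeff n)) →
      f.eval 0 = 0 → (Polynomial.derivative f).Monic →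
      (∀ z : ℂ, Tendsto
        (fun n : ℕ => ((d : ℝ) ^ n)⁻¹ * Real.log (max 1 ‖(fun x => f.eval x)^[n] z‖))
        atTop (nhds (G z))) →
      IsGreatest (G '' {c : ℂ | (Polynomial.derivative f).eval c = 0}) M →
      ∀ α y : ℂ, ‖α‖ ≤ escBound f d → (fun x => f.eval x)^[3] y = α →
        ∃ β : ℂ, (fun x => f.eval x)^[3] β = 0 ∧
          Real.log ‖y - β‖ ≤ -(1 / ((d : ℝ) - 1)) * M + δ := by
  have hd0 : (2 : ℝ) ≤ d := by exact_mod_cast hd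
  have hp : (1 : ℝ) ≤ 2 ^ d := one_le_pow₀ (by norm_num)
  obtain ⟨L, hL⟩ : ∃ L : ℝ, L = (d + 1) * 2 ^ d := ⟨_, rfl⟩
  have hL1 : 1 ≤ L := by rw [hL]; nlinarith
  obtain ⟨K, hK⟩ : ∃ K : ℝ, K = 2 * d * (d * 2 ^ d) := ⟨_, rfl⟩
  have hK1 : 0 ≤ K := by rw [hK]; positivity
  obtain ⟨K1, hKK1⟩ : ∃ K1 : ℝ, K1 = 1 + d * (K + d * 2 ^ d) := ⟨_, rfl⟩
  have hK11 : 1 ≤ K1 := by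
    have : 0 ≤ (d : ℝ) * (K + d * 2 ^ d) := by positivity
    linarith
  obtain ⟨K2, hKK2⟩ : ∃ K2 : ℝ, K2 = 1 + d * (K1 + d * 2 ^ d) := ⟨_, rfl⟩
  have hK21 : 1 ≤ K2 := by
    have : 0 ≤ (d : ℝ) * (K1 + d * 2 ^ d) := by positivity
    linarith
  obtain ⟨K3, hKK3⟩ : ∃ K3 : ℝ, K3 = 1 + d * (K2 + d * 2 ^ d) := ⟨_, rfl⟩
  have hK31 : 1 ≤ K3 := by
    have : 0 ≤ (d : ℝ) * (K2 + d * 2 ^ d) := by positivity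
    linarith
  obtain ⟨R0, hR0⟩ : ∃ R0 : ℝ, R0 = 1 + K1 * d * 2 ^ d + K2 * d * 2 ^ d := ⟨_, rfl⟩
  have hR0a : K1 * d * 2 ^ d < R0 := by
    have : 0 ≤ K2 * d * 2 ^ d := by positivity
    linarith
  have hR0b : K2 * d * 2 ^ d < R0 := by
    have : 0 ≤ K1 * d * 2 ^ d := by positivity
    linarith
  have hR01 : 1 ≤ R0 := by
    have : 0 ≤ K2 * d * 2 ^ d := by positivity
    have : 0 ≤ K1 * d * 2 ^ d := by positivity
    linarith
  obtain ⟨E, hE⟩ : ∃ E : ℝ, E = 16 * d * K1 := ⟨_, rfl⟩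
  have hE1 : 1 ≤ E := by rw [hE]; nlinarith
  have hd1 : (0 : ℝ) < (d : ℝ) - 1 := by linarith
  refine ⟨max ((Real.log (8 * d * E) + Real.log L) / (d - 1))
    (Real.log (K3 * R0) + (Real.log L + Real.log R0) / (d - 1)), ?_⟩
  intro f G M hdeg _ hf0 hmon hG hM α y hα hy
  obtain ⟨R, hN, hRc⟩ := NF.exists_R hd hdeg hf0 hmon
  have hR1 := hN.one_le
  have hML : M ≤ Real.log L + Real.log R := by
    obtain ⟨⟨c, hc, rfl⟩, _⟩ := hM
    rw [hL]
    exact hN.G_le c (hN.bd c hc) _ (hG c)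
  have hαK : ‖α‖ ≤ K * R := hα.trans (by rw [hK]; exact hN.esc_le)
  have hy' : f.eval (f.eval (f.eval y)) = α := hy
  have hz1 : ‖f.eval (f.eval y)‖ ≤ K1 * R := by
    rw [hKK1]; exact hN.preim_le K hK1 _ (by rw [hy']; exact hαK)
  have hz2 : ‖f.eval y‖ ≤ K2 * R := by
    rw [hKK2]; exact hN.preim_le K1 (by linarith) _ hz1
  have hz3 : ‖y‖ ≤ K3 * R := by
    rw [hKK3]; exact hN.preim_le K2 (by linarith) _ hz2
  by_cases hRR : R < R0
  · refine ⟨0, ?_, ?_⟩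
    · change f.eval (f.eval (f.eval 0)) = 0
      rw [hf0, hf0, hf0]
    · have hlR : Real.log R ≤ Real.log R0 := Real.log_le_log (by linarith) hRR.le
      have hly : Real.log ‖y - 0‖ ≤ Real.log (K3 * R0) := by
        rw [sub_zero]
        rcases (norm_nonneg y).eq_or_lt with h | h
        · rw [← h, Real.log_zero]; exact Real.log_nonneg (by nlinarith)
        · exact Real.log_le_log h (hz3.trans (by gcongr))
      have hM2 : M / ((d : ℝ) - 1) ≤ (Real.log L + Real.log R0) / (d - 1) := by
        gcongr; linarith
      have := le_max_right ((Real.log (8 * d * E) + Real.log L) / (d - 1))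
        (Real.log (K3 * R0) + (Real.log L + Real.log R0) / ((d : ℝ) - 1))
      have e : -(1 / ((d : ℝ) - 1)) * M = -(M / ((d : ℝ) - 1)) := by ring
      rw [e]; linarith
  · push Not at hRR
    have hc : ∃ c : ℂ, (Polynomial.derivative f).eval c = 0 ∧ ‖c‖ = R := by
      rcases hRc with h | h
      · exfalso
        have : (0 : ℝ) < K1 * d * 2 ^ d := by positivity
        have : (0 : ℝ) < K2 * d * 2 ^ d := by positivity
        linarith
      · exact h
    obtain ⟨r, hr, hrfar⟩ := hN.exists_far K1 (by linarith) hc 0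
      (by rw [norm_zero]; positivity) (f.eval (f.eval y))
    have hrne : f.eval (f.eval y) ≠ r := by
      intro h; rw [h, sub_self, norm_zero] at hrfar; linarith
    have hrK : ‖r‖ ≤ K1 * R := by
      rw [hKK1]; exact hN.preim_le K hK1 _ (by rw [hr, norm_zero]; positivity)
    obtain ⟨s, hs, hsn⟩ := hN.exists_near K1 (by linarith) hc r hrK (f.eval y) (2 * K1 * R)
      ((norm_sub_le _ _).trans (by linarith))
    have hsne : f.eval y ≠ s := by
      intro h; rw [h] at hrne; exact hrne hs
    have hsK : ‖s‖ ≤ K2 * R := by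
      rw [hKK2]; exact hN.preim_le K1 (by linarith) _ (by rw [hs]; exact hrK)
    have hsE : ‖f.eval y - s‖ ≤ E := by
      have e : 8 * (d : ℝ) * (2 * K1 * R) / R = E := by rw [hE]; field_simp; ring
      rw [e] at hsn
      by_contra hcon
      push Not at hcon
      have := le_self_pow₀ (a := ‖f.eval y - s‖) (by linarith) (show d - 1 ≠ 0 by omega)
      linarith
    obtain ⟨β, hβ, hβn⟩ := hN.exists_near K2 (by linarith) hc s hsK y E hsE
    have hβne : y ≠ β := by
      intro h; rw [h] at hsne; exact hsne hβ
    refine ⟨β, ?_, ?_⟩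
    · change f.eval (f.eval (f.eval β)) = 0
      rw [hβ, hs, hr]
    · have hpos : 0 < ‖y - β‖ := norm_pos_iff.2 (sub_ne_zero.2 hβne)
      have hl := Real.log_le_log (by positivity) hβn
      rw [Real.log_pow, Real.log_div (by positivity) (by positivity), Nat.cast_sub (by omega),
        Nat.cast_one] at hl
      have h1 : Real.log ‖y - β‖ ≤ (Real.log (8 * d * E) + Real.log L - M) / (d - 1) := by
        rw [le_div_iff₀ hd1]; linarith
      have := le_max_left ((Real.log (8 * d * E) + Real.log L) / (d - 1))
        (Real.log (K3 * R0) + (Real.log L + Real.log R0) / ((d : ℝ) - 1))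
      have e : (Real.log (8 * d * E) + Real.log L - M) / ((d : ℝ) - 1)
        = (Real.log (8 * d * E) + Real.log L) / (d - 1) + -(1 / ((d : ℝ) - 1)) * M := by ring
      rw [e] at h1
      linarith
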